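/- arXiv:1504.02685 — 14 statements merged into one kernel-verified Lean document; each statement's English description precedes it below -/
import Mathlib

section
/- Let H be a real Hilbert space, let λ ∈ [0,∞), s ∈ {−1,1}, let J be a unitary operator on H, and let n ∈ H be a unit vector. Then for every w ∈ M(H) one has W_{λ,∞}[s,n,J]( W_{λ,∞}[s,Jn,J⁻¹] w ) = w; that is, the composition of the generalized Galilean transform W_{λ,∞}[s,n,J] with W_{λ,∞}[s,Jn,J⁻¹] is the identity operator on M(H). -/
open scoped InnerProductSpace

/-- Generalized Lorentz transform `W_{λ,c}[s,n,J]` on `M(H) = ℝ × H` (case `λ < ∞`, `c < ∞`). -/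
noncomputable def Wfin {H : Type*} [NormedAddCommGroup H] [InnerProductSpace ℝ H]
    (lam c s : ℝ) (n : H) (J : H ≃ₗᵢ[ℝ] H) (w : ℝ × H) : ℝ × H :=
  ((s * w.1 - lam / c ^ 2 * ⟪n, w.2⟫_ℝ) / Real.sqrt |1 - lam ^ 2 / c ^ 2|,
    J (((lam * w.1 - s * ⟪n, w.2⟫_ℝ) / Real.sqrt |1 - lam ^ 2 / c ^ 2|) • n
      + (w.2 - ⟪n, w.2⟫_ℝ • n)))

/-- Generalized Lorentz transform `W_{λ,∞}[s,n,J]` on `M(H) = ℝ × H` (case `c = ∞`). -/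
noncomputable def Wgal {H : Type*} [NormedAddCommGroup H] [InnerProductSpace ℝ H]
    (lam s : ℝ) (n : H) (J : H ≃ₗᵢ[ℝ] H) (w : ℝ × H) : ℝ × H :=
  (s * w.1, J ((lam * w.1 - s * ⟪n, w.2⟫_ℝ) • n + (w.2 - ⟪n, w.2⟫_ℝ • n)))

/-- Generalized Lorentz transform `W_{∞,c}[s,n,J]` on `M(H) = ℝ × H` (case `λ = ∞`). -/
noncomputable def Wtach {H : Type*} [NormedAddCommGroup H] [InnerProductSpace ℝ H]
    (c s : ℝ) (n : H) (J : H ≃ₗᵢ[ℝ] H) (w : ℝ × H) : ℝ × H :=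
  (-⟪n, w.2⟫_ℝ / c, J ((c * w.1) • n + (w.2 - ⟪n, w.2⟫_ℝ • n)))

/-- `W_{λ,∞}[s,n,J] ∘ W_{λ,∞}[s,Jn,J⁻¹] = id` on `M(H)`. -/
theorem stmt0 {H : Type*} [NormedAddCommGroup H] [InnerProductSpace ℝ H] [CompleteSpace H]
    (lam : ℝ) (hlam : 0 ≤ lam) (s : ℝ) (hs : s = 1 ∨ s = -1)
    (J : H ≃ₗᵢ[ℝ] H) (n : H) (hn : ‖n‖ = 1) :
    ∀ w : ℝ × H, Wgal lam s n J (Wgal lam s (J n) J.symm w) = w := by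
  rintro ⟨t, x⟩
  obtain ⟨y, rfl⟩ := J.surjective x
  have hss : s * s = 1 := by rcases hs with h | h <;> rw [h] <;> norm_num
  have hnn : ⟪n, n⟫_ℝ = 1 := by rw [real_inner_self_eq_norm_sq, hn]; norm_num
  have h1 : Wgal lam s (J n) J.symm (t, J y)
      = (s * t, (lam * t - s * ⟪n, y⟫_ℝ) • n + (y - ⟪n, y⟫_ℝ • n)) := by
    simp [Wgal]
  have h2 : ⟪n, (lam * t - s * ⟪n, y⟫_ℝ) • n + (y - ⟪n, y⟫_ℝ • n)⟫_ℝ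
      = lam * t - s * ⟪n, y⟫_ℝ := by
    rw [inner_add_right, inner_sub_right, real_inner_smul_right, real_inner_smul_right, hnn]
    ring
  rw [h1]
  unfold Wgal
  simp only [h2]
  refine Prod.ext ?_ ?_
  · show s * (s * t) = t
    rw [← mul_assoc, hss, one_mul]
  · show J _ = J y
    congr 1
    have h3 : lam * (s * t) - s * (lam * t - s * ⟪n, y⟫_ℝ) = ⟪n, y⟫_ℝ := by
      linear_combination ⟪n, y⟫_ℝ * hss
    rw [h3]
    module
end

section
/- Let H be a real Hilbert space, let λ ∈ [0,∞), s ∈ {−1,1}, let J be a unitary operator on H, and let n ∈ H be a unit vector. Then W_{λ,∞}[s,n,J] is a continuous linear bijection of M(H) onto M(H), whose (continuous linear) inverse is W_{λ,∞}[s,Jn,J⁻¹]. -/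
open scoped InnerProductSpace

theorem Wgal_clm {H : Type*} [NormedAddCommGroup H] [InnerProductSpace ℝ H]
    (lam s : ℝ) (n : H) (J : H ≃ₗᵢ[ℝ] H) :
    ∃ A : (ℝ × H) →L[ℝ] (ℝ × H), ∀ w, A w = Wgal lam s n J w := by
  refine ⟨⟨⟨⟨Wgal lam s n J, ?_⟩, ?_⟩, ?_⟩, fun w => rfl⟩
  · intro x y
    simp only [Wgal, Prod.fst_add, Prod.snd_add, inner_add_right, Prod.mk_add_mk, ← map_add]
    refine Prod.ext (by ring) (congrArg J ?_)
    module
  · intro c x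
    simp only [Wgal, Prod.smul_fst, Prod.smul_snd, inner_smul_right, Prod.smul_mk, smul_eq_mul,
      RingHom.id_apply, ← map_smul]
    refine Prod.ext (by ring) (congrArg J ?_)
    module
  · change Continuous (Wgal lam s n J)
    unfold Wgal
    have hJ := J.continuous
    fun_prop

theorem Wgal_left_inv {H : Type*} [NormedAddCommGroup H] [InnerProductSpace ℝ H]
    (lam s : ℝ) (hs : s = 1 ∨ s = -1) (J : H ≃ₗᵢ[ℝ] H) (n : H) (hn : ‖n‖ = 1) (w : ℝ × H) :
    Wgal lam s (J n) J.symm (Wgal lam s n J w) = w := by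
  obtain ⟨t, x⟩ := w
  have hnn : ⟪n, n⟫_ℝ = 1 := by rw [real_inner_self_eq_norm_sq, hn]; norm_num
  simp only [Wgal, LinearIsometryEquiv.inner_map_map, map_add, map_sub, map_smul,
    LinearIsometryEquiv.symm_apply_apply, inner_add_right, inner_sub_right, inner_smul_right, hnn]
  rcases hs with rfl | rfl
  · refine Prod.ext (by ring) ?_
    module
  · refine Prod.ext (by ring) ?_
    module

/-- `W_{λ,∞}[s,n,J]` is a continuous linear bijection of `M(H)` onto itself,
whose (continuous linear) inverse is `W_{λ,∞}[s,Jn,J⁻¹]`. -/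
theorem stmt1 {H : Type*} [NormedAddCommGroup H] [InnerProductSpace ℝ H] [CompleteSpace H]
    (lam : ℝ) (hlam : 0 ≤ lam) (s : ℝ) (hs : s = 1 ∨ s = -1)
    (J : H ≃ₗᵢ[ℝ] H) (n : H) (hn : ‖n‖ = 1) :
    Function.Bijective (Wgal lam s n J) ∧
    (∃ A : (ℝ × H) →L[ℝ] (ℝ × H), ∀ w, A w = Wgal lam s n J w) ∧
    (∃ B : (ℝ × H) →L[ℝ] (ℝ × H), ∀ w, B w = Wgal lam s (J n) J.symm w) ∧
    (∀ w, Wgal lam s (J n) J.symm (Wgal lam s n J w) = w) ∧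
    (∀ w, Wgal lam s n J (Wgal lam s (J n) J.symm w) = w) := by
  have hL := Wgal_left_inv lam s hs J n hn
  have hR : ∀ w, Wgal lam s n J (Wgal lam s (J n) J.symm w) = w := by
    intro w
    have h := Wgal_left_inv lam s hs J.symm (J n) (by simpa using hn) w
    simpa using h
  exact ⟨⟨Function.LeftInverse.injective hL, Function.RightInverse.surjective hR⟩,
    Wgal_clm lam s n J, Wgal_clm lam s (J n) J.symm, hL, hR⟩
end

section
/- Let H be a real Hilbert space, let 0 < c < ∞, s ∈ {−1,1}, let J be a unitary operator on H, let n ∈ H be a unit vector, and let a ∈ M(H). Then the map W_{∞,c}[s,n,J;a] is a bijection of M(H) onto M(H), W_{∞,c}[s,n,J] is a continuous linear operator on M(H), and the inverse of W_{∞,c}[s,n,J;a] is again a continuous affine map (a continuous linear operator plus a constant vector). -/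
open scoped InnerProductSpace

/-- for `0 < c < ∞`, the map `W_{∞,c}[s,n,J;a]` is a bijection of `M(H)`,
`W_{∞,c}[s,n,J]` is a continuous linear operator, and the inverse of `W_{∞,c}[s,n,J;a]`
is a continuous affine map (a continuous linear operator plus a constant). -/
theorem stmt3 {H : Type*} [NormedAddCommGroup H] [InnerProductSpace ℝ H] [CompleteSpace H]
    (c : ℝ) (hc : 0 < c) (s : ℝ) (hs : s = 1 ∨ s = -1)
    (J : H ≃ₗᵢ[ℝ] H) (n : H) (hn : ‖n‖ = 1) (a : ℝ × H) :
    Function.Bijective (fun w => Wtach c s n J (w + a)) ∧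
    (∃ A : (ℝ × H) →L[ℝ] (ℝ × H), ∀ w, A w = Wtach c s n J w) ∧
    (∃ B : (ℝ × H) →L[ℝ] (ℝ × H), ∃ b : ℝ × H,
      (∀ w, B (Wtach c s n J (w + a)) + b = w) ∧
      (∀ w, Wtach c s n J ((B w + b) + a) = w)) := by
  have hnn : ⟪n, n⟫_ℝ = 1 := by
    rw [real_inner_self_eq_norm_sq, hn]; norm_num
  have hc' : c ≠ 0 := hc.ne'
  let f : (ℝ × H) →L[ℝ] ℝ := ContinuousLinearMap.fst ℝ ℝ H
  let g : (ℝ × H) →L[ℝ] H := ContinuousLinearMap.snd ℝ ℝ H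
  let Jc : H →L[ℝ] H := J.toContinuousLinearEquiv.toContinuousLinearMap
  let Ji : H →L[ℝ] H := J.symm.toContinuousLinearEquiv.toContinuousLinearMap
  let k : H →L[ℝ] ℝ := innerSL ℝ n
  let A : (ℝ × H) →L[ℝ] (ℝ × H) :=
    ((-c⁻¹) • (k.comp g)).prod
      (Jc.comp ((c • f).smulRight n + (g - (k.comp g).smulRight n)))
  let B : (ℝ × H) →L[ℝ] (ℝ × H) :=
    (c⁻¹ • (k.comp (Ji.comp g))).prod
      ((-(c • f)).smulRight n + (Ji.comp g - (k.comp (Ji.comp g)).smulRight n))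
  have hA : ∀ w, A w = Wtach c s n J w := by
    intro w
    refine Prod.ext ?_ ?_
    · simp [A, Wtach, k, g]
      ring
    · simp [A, Wtach, k, g, f, Jc]
  have hB : ∀ w, B w = (c⁻¹ * ⟪n, J.symm w.2⟫_ℝ,
      (-(c * w.1)) • n + (J.symm w.2 - ⟪n, J.symm w.2⟫_ℝ • n)) := by
    intro w
    refine Prod.ext ?_ ?_
    · simp [B, k, g, Ji]
    · simp [B, k, g, f, Ji]
  have hBA : ∀ w, B (Wtach c s n J w) = w := by
    intro w
    rw [hB]
    unfold Wtach
    simp only [LinearIsometryEquiv.symm_apply_apply, inner_add_right, inner_sub_right,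
      inner_smul_right, hnn]
    refine Prod.ext ?_ ?_
    · simp; field_simp
    · have h : c * (-⟪n, w.2⟫_ℝ / c) = -⟪n, w.2⟫_ℝ := by field_simp
      simp only [h]
      module
  have hAB : ∀ w, Wtach c s n J (B w) = w := by
    intro w
    rw [hB]
    unfold Wtach
    simp only [inner_add_right, inner_sub_right, inner_smul_right, hnn]
    refine Prod.ext ?_ ?_
    · simp; field_simp
    · have h : c * (c⁻¹ * ⟪n, J.symm w.2⟫_ℝ) = ⟪n, J.symm w.2⟫_ℝ := by field_simp
      simp only [h]
      apply J.symm.injective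
      rw [J.symm_apply_apply]
      module
  have h1 : ∀ w, B (Wtach c s n J (w + a)) + -a = w := by
    intro w; rw [hBA]; abel
  have h2 : ∀ w, Wtach c s n J ((B w + -a) + a) = w := by
    intro w; rw [neg_add_cancel_right, hAB]
  exact ⟨Function.bijective_iff_has_inverse.mpr ⟨fun w => B w + -a, h1, h2⟩, ⟨A, hA⟩, B, -a, h1, h2⟩
end

section
/- Let H be a real Hilbert space, let Vf ⊆ (0,∞] be a nonempty set of forbidden velocities, and let λ ∈ [0,∞] \ Vf. Then for every s ∈ {−1,1}, every unitary operator J on H, every unit vector n ∈ H and every a ∈ M(H), the map W_{λ;Vf}[s,n,J;a], which sends ω = (t,(x,c)) ∈ M(H_Vf) to (T(W_{λ,c}[s,n,J;a]ω*), (X-component of W_{λ,c}[s,n,J;a]ω*, c)) where ω* = (t,x), is a bijection of M(H_Vf) = ℝ × (H × Vf) onto itself. -/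
open scoped InnerProductSpace

open scoped ENNReal

/-- Generalized Lorentz transform `W_{λ,c}[s,n,J]` with extended-real parameters
`λ, c ∈ [0,∞]` (only the combinations appearing in the paper are meaningful). -/
noncomputable def Wgen {H : Type*} [NormedAddCommGroup H] [InnerProductSpace ℝ H]
    (lam c : ℝ≥0∞) (s : ℝ) (n : H) (J : H ≃ₗᵢ[ℝ] H) (w : ℝ × H) : ℝ × H :=
  if c = ⊤ then Wgal lam.toReal s n J w
  else if lam = ⊤ then Wtach c.toReal s n J w
  else Wfin lam.toReal c.toReal s n J w

/-- The transform `W_{λ;Vf}[s,n,J;a]` on the Minkowski space with forbidden velocities,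
`M(H_Vf) = ℝ × (H × Vf)`: it sends `ω = (t,(x,c))` to the point whose `M(H)`-part is
`W_{λ,c}[s,n,J;a] ω*` (with `ω* = (t,x)`) and whose velocity component is again `c`. -/
noncomputable def WVf {H : Type*} [NormedAddCommGroup H] [InnerProductSpace ℝ H]
    (Vf : Set ℝ≥0∞) (lam : ℝ≥0∞) (s : ℝ) (n : H) (J : H ≃ₗᵢ[ℝ] H) (a : ℝ × H)
    (ω : ℝ × H × ↥Vf) : ℝ × H × ↥Vf :=
  ((Wgen lam (ω.2.2 : ℝ≥0∞) s n J ((ω.1, ω.2.1) + a)).1,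
    (Wgen lam (ω.2.2 : ℝ≥0∞) s n J ((ω.1, ω.2.1) + a)).2, ω.2.2)

theorem genLin_bij {H : Type*} [NormedAddCommGroup H] [InnerProductSpace ℝ H]
    (p q r u : ℝ) (hd : p * u - q * r ≠ 0) (J : H ≃ₗᵢ[ℝ] H) (n : H) (hn : ‖n‖ = 1) :
    Function.Bijective (fun w : ℝ × H => ((p * w.1 + q * ⟪n, w.2⟫_ℝ,
      J ((r * w.1 + u * ⟪n, w.2⟫_ℝ) • n + (w.2 - ⟪n, w.2⟫_ℝ • n))) : ℝ × H)) := by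
  have hnn : ⟪n, n⟫_ℝ = 1 := by rw [real_inner_self_eq_norm_sq, hn]; norm_num
  constructor
  · rintro ⟨t, x⟩ ⟨t', x'⟩ h
    simp only [Prod.mk.injEq] at h
    obtain ⟨h1, h2⟩ := h
    have h2 := J.injective h2
    have h3 := congrArg (fun z => ⟪n, z⟫_ℝ) h2
    simp only [inner_add_right, inner_sub_right, inner_smul_right, hnn] at h3
    have ht : t = t' := by
      apply mul_left_cancel₀ hd
      linear_combination u * h1 - q * h3
    have hx : ⟪n, x⟫_ℝ = ⟪n, x'⟫_ℝ := by
      apply mul_left_cancel₀ hd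
      linear_combination p * h3 - r * h1
    rw [ht, hx] at h2
    have h4 := sub_left_injective (add_left_cancel h2)
    rw [ht, h4]
  · rintro ⟨t, y⟩
    obtain ⟨x, rfl⟩ := J.surjective y
    set d := p * u - q * r with hdd
    have hy : ⟪n, ((p * ⟪n, x⟫_ℝ - r * t) / d) • n + (x - ⟪n, x⟫_ℝ • n)⟫_ℝ
        = (p * ⟪n, x⟫_ℝ - r * t) / d := by
      simp only [inner_add_right, inner_sub_right, inner_smul_right, hnn]; ring
    refine ⟨((u * t - q * ⟪n, x⟫_ℝ) / d,
      ((p * ⟪n, x⟫_ℝ - r * t) / d) • n + (x - ⟪n, x⟫_ℝ • n)), ?_⟩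
    simp only [hy, Prod.mk.injEq]
    constructor
    · field_simp
      rw [hdd]; ring
    · congr 1
      have : r * ((u * t - q * ⟪n, x⟫_ℝ) / d) + u * ((p * ⟪n, x⟫_ℝ - r * t) / d)
          = ⟪n, x⟫_ℝ := by
        field_simp
        rw [hdd]; ring
      rw [this]
      abel

theorem Wgen_bij {H : Type*} [NormedAddCommGroup H] [InnerProductSpace ℝ H]
    (lam c : ℝ≥0∞) (hc : 0 < c) (hlc : lam ≠ c) (s : ℝ) (hs : s = 1 ∨ s = -1)
    (J : H ≃ₗᵢ[ℝ] H) (n : H) (hn : ‖n‖ = 1) :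
    Function.Bijective (Wgen lam c s n J) := by
  have hss : s * s = 1 := by rcases hs with rfl | rfl <;> norm_num
  by_cases h1 : c = ⊤
  · convert genLin_bij s 0 lam.toReal (-s) (by nlinarith) J n hn using 1
    funext w
    simp only [Wgen, h1, if_true, Wgal]
    congr 1
    · ring
    · ring_nf
  have hc0 : 0 < c.toReal := ENNReal.toReal_pos hc.ne' h1
  by_cases h2 : lam = ⊤
  · convert genLin_bij 0 (-1 / c.toReal) c.toReal 0 (by field_simp; norm_num) J n hn using 1
    funext w
    simp only [Wgen, h1, h2, if_true, if_false, Wtach]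
    congr 1
    · ring
    · ring_nf
  have hne : lam.toReal ≠ c.toReal := fun h => hlc ((ENNReal.toReal_eq_toReal_iff' h2 h1).1 h)
  have hl0 : 0 ≤ lam.toReal := ENNReal.toReal_nonneg
  have hD : 1 - lam.toReal ^ 2 / c.toReal ^ 2 ≠ 0 := by
    intro h
    field_simp at h
    have : lam.toReal ^ 2 = c.toReal ^ 2 := by linarith
    exact hne ((sq_eq_sq₀ hl0 hc0.le).1 this)
  have hg : 0 < Real.sqrt |1 - lam.toReal ^ 2 / c.toReal ^ 2| :=
    Real.sqrt_pos.2 (abs_pos.2 hD)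
  set g := Real.sqrt |1 - lam.toReal ^ 2 / c.toReal ^ 2| with hgdef
  convert genLin_bij (s / g) (-(lam.toReal / c.toReal ^ 2) / g) (lam.toReal / g) (-s / g) ?_ J n hn
    using 1
  · funext w
    simp only [Wgen, h1, h2, if_false, Wfin, ← hgdef]
    congr 1
    · ring
    · congr 3
      ring
  · have : s / g * (-s / g) - -(lam.toReal / c.toReal ^ 2) / g * (lam.toReal / g)
        = -(1 - lam.toReal ^ 2 / c.toReal ^ 2) / g ^ 2 := by
      rw [← hss]; ring
    rw [this]
    exact div_ne_zero (neg_ne_zero.2 hD) (by positivity)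

/-- for a nonempty set `Vf ⊆ (0,∞]` of forbidden velocities and any
`λ ∈ [0,∞] \ Vf`, `s ∈ {−1,1}`, unitary `J`, unit vector `n` and `a ∈ M(H)`, the map
`W_{λ;Vf}[s,n,J;a]` is a bijection of `M(H_Vf) = ℝ × (H × Vf)` onto itself. -/
theorem stmt4 {H : Type*} [NormedAddCommGroup H] [InnerProductSpace ℝ H] [CompleteSpace H]
    (Vf : Set ℝ≥0∞) (hVfne : Vf.Nonempty) (hVf : Vf ⊆ Set.Ioi 0)
    (lam : ℝ≥0∞) (hlam : lam ∉ Vf) (s : ℝ) (hs : s = 1 ∨ s = -1)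
    (J : H ≃ₗᵢ[ℝ] H) (n : H) (hn : ‖n‖ = 1) (a : ℝ × H) :
    Function.Bijective (WVf Vf lam s n J a) := by
  have key : ∀ c : ↥Vf, Function.Bijective (Wgen lam (c : ℝ≥0∞) s n J) := fun c =>
    Wgen_bij lam c (hVf c.2) (fun h => hlam (h ▸ c.2)) s hs J n hn
  constructor
  · rintro ⟨t, x, c⟩ ⟨t', x', c'⟩ h
    simp only [WVf, Prod.mk.injEq] at h
    obtain ⟨h1, h2, rfl⟩ := h
    have h3 := add_right_cancel ((key c).1 (Prod.ext h1 h2))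
    simp only [Prod.mk.injEq] at h3
    rw [h3.1, h3.2]
  · rintro ⟨t, x, c⟩
    obtain ⟨w, hw⟩ := (key c).2 (t, x)
    refine ⟨((w - a).1, (w - a).2, c), ?_⟩
    simp only [WVf, Prod.mk.eta, sub_add_cancel, hw]
end

section
/- Let H be a real Hilbert space, let 0 < c₁, c₂ < ∞ with c₁ ≠ c₂, let s ∈ {−1,1} and let J be a unitary operator on H. Then for every ε ∈ (0, min(c₁,c₂)) and all vectors w₁, w₂ ∈ M(H) with w₁ ≠ w₂, there exist λ ∈ (0,ε), a unit vector n ∈ H and a ∈ M(H) such that W_{λ,c₁}[s,n,J;a] w₁ = W_{λ,c₂}[s,n,J;a] w₂. -/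
open scoped InnerProductSpace

theorem aux_solve (l c₁ c₂ s r₁ r₂ t₁ t₂ p₁ p₂ : ℝ) (hs : s * s = 1) (h₁ : r₁ ≠ 0) (h₂ : r₂ ≠ 0)
    (hr : r₁ ≠ r₂) (e₁ : r₁ ^ 2 = 1 - l ^ 2 / c₁ ^ 2) (e₂ : r₂ ^ 2 = 1 - l ^ 2 / c₂ ^ 2) :
    ∃ α y : ℝ, (s * (t₁ + α) - l / c₁ ^ 2 * (p₁ + y)) / r₁
        = (s * (t₂ + α) - l / c₂ ^ 2 * (p₂ + y)) / r₂ ∧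
      (l * (t₁ + α) - s * (p₁ + y)) / r₁ = (l * (t₂ + α) - s * (p₂ + y)) / r₂ := by
  obtain ⟨A, hA⟩ : ∃ A, A = r₁⁻¹ - r₂⁻¹ := ⟨_, rfl⟩
  obtain ⟨B, hB⟩ : ∃ B, B = l / c₁ ^ 2 * r₁⁻¹ - l / c₂ ^ 2 * r₂⁻¹ := ⟨_, rfl⟩
  obtain ⟨P, hP⟩ : ∃ P, P = (s * t₂ - l / c₂ ^ 2 * p₂) * r₂⁻¹ - (s * t₁ - l / c₁ ^ 2 * p₁) * r₁⁻¹ :=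
    ⟨_, rfl⟩
  obtain ⟨Q, hQ⟩ : ∃ Q, Q = (l * t₂ - s * p₂) * r₂⁻¹ - (l * t₁ - s * p₁) * r₁⁻¹ := ⟨_, rfl⟩
  have hA0 : A ≠ 0 := by
    rw [hA, sub_ne_zero]
    exact fun h => hr (inv_injective h)
  have hlB : l * B = A + (r₂ - r₁) := by
    have : l * B = (1 - r₁ ^ 2) * r₁⁻¹ - (1 - r₂ ^ 2) * r₂⁻¹ := by
      rw [hB, e₁, e₂]; ring
    rw [this, hA]
    field_simp
    ring
  have hD : l * A * B - A ^ 2 ≠ 0 := by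
    have : l * A * B - A ^ 2 = A * (r₂ - r₁) := by linear_combination A * hlB
    rw [this]
    exact mul_ne_zero hA0 (sub_ne_zero.2 hr.symm)
  obtain ⟨D, hDD⟩ : ∃ D, D = l * A * B - A ^ 2 := ⟨_, rfl⟩
  rw [← hDD] at hD
  refine ⟨(-s * A * P + B * Q) / D, (s * A * Q - l * A * P) / D, ?_, ?_⟩
  · have key : s * A * ((-s * A * P + B * Q) / D) - B * ((s * A * Q - l * A * P) / D) = P := by
      field_simp
      rw [hDD]
      linear_combination (-A ^ 2 * P) * hs
    generalize (-s * A * P + B * Q) / D = α at *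
    generalize (s * A * Q - l * A * P) / D = y at *
    rw [hA, hB, hP] at key
    simp only [div_eq_mul_inv] at *
    linear_combination key
  · have key : l * A * ((-s * A * P + B * Q) / D) - s * A * ((s * A * Q - l * A * P) / D) = Q := by
      field_simp
      rw [hDD]
      linear_combination (-A ^ 2 * Q) * hs
    generalize (-s * A * P + B * Q) / D = α at *
    generalize (s * A * Q - l * A * P) / D = y at *
    rw [hA, hQ] at key
    simp only [div_eq_mul_inv] at *
    linear_combination key

theorem aux_dir {H : Type*} [NormedAddCommGroup H] [InnerProductSpace ℝ H] [Nontrivial H] (d : H) :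
    ∃ n : H, ‖n‖ = 1 ∧ d = ⟪n, d⟫_ℝ • n := by
  by_cases hd : d = 0
  · obtain ⟨n, hn⟩ := exists_norm_eq H (zero_le_one (α := ℝ))
    exact ⟨n, hn, by simp [hd]⟩
  · have h0 : ‖d‖ ≠ 0 := norm_ne_zero_iff.2 hd
    refine ⟨‖d‖⁻¹ • d, by rw [norm_smul, norm_inv, norm_norm, inv_mul_cancel₀ h0], ?_⟩
    rw [real_inner_smul_left, real_inner_self_eq_norm_sq, smul_smul]
    have : ‖d‖⁻¹ * ‖d‖ ^ 2 * ‖d‖⁻¹ = 1 := by field_simp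
    rw [this, one_smul]

theorem aux_root (l c : ℝ) (hl : 0 < l) (hc : l < c) : 0 < Real.sqrt |1 - l ^ 2 / c ^ 2| ∧
    Real.sqrt |1 - l ^ 2 / c ^ 2| ^ 2 = 1 - l ^ 2 / c ^ 2 := by
  have h : 0 < 1 - l ^ 2 / c ^ 2 := by
    rw [sub_pos, div_lt_one (by have := hl.trans hc; positivity)]
    gcongr
  rw [abs_of_pos h]
  exact ⟨Real.sqrt_pos.2 h, Real.sq_sqrt h.le⟩

/-- Lemma on merging of distinct points, finite `c₁ ≠ c₂`: for every
`ε ∈ (0, min(c₁,c₂))` and all `w₁ ≠ w₂` in `M(H)` there exist `λ ∈ (0,ε)`, a unit vector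
`n` and `a ∈ M(H)` with `W_{λ,c₁}[s,n,J;a] w₁ = W_{λ,c₂}[s,n,J;a] w₂`. -/
theorem stmt5 {H : Type*} [NormedAddCommGroup H] [InnerProductSpace ℝ H] [CompleteSpace H]
    [Nontrivial H]
    (c₁ c₂ : ℝ) (hc₁ : 0 < c₁) (hc₂ : 0 < c₂) (hcc : c₁ ≠ c₂)
    (s : ℝ) (hs : s = 1 ∨ s = -1) (J : H ≃ₗᵢ[ℝ] H)
    (ε : ℝ) (hε : 0 < ε) (hε' : ε < min c₁ c₂)
    (w₁ w₂ : ℝ × H) (hw : w₁ ≠ w₂) :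
    ∃ lam : ℝ, 0 < lam ∧ lam < ε ∧ ∃ n : H, ‖n‖ = 1 ∧ ∃ a : ℝ × H,
      Wfin lam c₁ s n J (w₁ + a) = Wfin lam c₂ s n J (w₂ + a) := by
  have hε₁ : ε < c₁ := hε'.trans_le (min_le_left _ _)
  have hε₂ : ε < c₂ := hε'.trans_le (min_le_right _ _)
  have hl : 0 < ε / 2 := by linarith
  obtain ⟨a₁, b₁⟩ := aux_root (ε / 2) c₁ hl (by linarith)
  obtain ⟨a₂, b₂⟩ := aux_root (ε / 2) c₂ hl (by linarith)
  obtain ⟨n, hn, hd⟩ := aux_dir (w₁.2 - w₂.2)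
  refine ⟨ε / 2, hl, by linarith, n, hn, ?_⟩
  unfold Wfin
  generalize ε / 2 = l at *
  generalize Real.sqrt |1 - l ^ 2 / c₁ ^ 2| = r₁ at *
  generalize Real.sqrt |1 - l ^ 2 / c₂ ^ 2| = r₂ at *
  have hr : r₁ ≠ r₂ := by
    rintro rfl
    apply hcc
    have h : l ^ 2 / c₁ ^ 2 = l ^ 2 / c₂ ^ 2 := by linarith
    rw [div_eq_div_iff (by positivity) (by positivity)] at h
    have h' := mul_left_cancel₀ (by positivity) h
    exact ((sq_eq_sq₀ hc₂.le hc₁.le).1 h').symm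
  have hs' : s * s = 1 := by rcases hs with rfl | rfl <;> norm_num
  obtain ⟨α, y, h1, h2⟩ := aux_solve l c₁ c₂ s r₁ r₂ w₁.1 w₂.1 ⟪n, w₁.2⟫_ℝ ⟪n, w₂.2⟫_ℝ hs'
    a₁.ne' a₂.ne' hr b₁ b₂
  refine ⟨(α, y • n), ?_⟩
  have hy : ⟪n, y • n⟫_ℝ = y := by
    rw [real_inner_smul_right, real_inner_self_eq_norm_sq, hn]; ring
  simp only [Prod.fst_add, Prod.snd_add, inner_add_right, hy]
  rw [h1, h2]
  congr 3
  rw [inner_sub_right, sub_smul] at hd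
  rw [add_smul, add_smul, ← sub_eq_zero]
  rw [← sub_eq_zero] at hd
  rw [← hd]
  abel
end

section
/- Let H be a real Hilbert space, let 0 < c₁ < ∞, let s ∈ {−1,1} and let J be a unitary operator on H. Then for every ε ∈ (0, c₁) and all vectors w₁, w₂ ∈ M(H) with w₁ ≠ w₂, there exist λ ∈ (0,ε), a unit vector n ∈ H and a ∈ M(H) such that W_{λ,c₁}[s,n,J;a] w₁ = W_{λ,∞}[s,n,J;a] w₂. -/
open scoped InnerProductSpace

/-- Lemma on merging of distinct points, `c₂ = ∞`: for every `ε ∈ (0,c₁)`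
and all `w₁ ≠ w₂` in `M(H)` there exist `λ ∈ (0,ε)`, a unit vector `n` and `a ∈ M(H)`
with `W_{λ,c₁}[s,n,J;a] w₁ = W_{λ,∞}[s,n,J;a] w₂`. -/
theorem stmt6 {H : Type*} [NormedAddCommGroup H] [InnerProductSpace ℝ H] [CompleteSpace H]
    [Nontrivial H]
    (c₁ : ℝ) (hc₁ : 0 < c₁)
    (s : ℝ) (hs : s = 1 ∨ s = -1) (J : H ≃ₗᵢ[ℝ] H)
    (ε : ℝ) (hε : 0 < ε) (hε' : ε < c₁)
    (w₁ w₂ : ℝ × H) (hw : w₁ ≠ w₂) :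
    ∃ lam : ℝ, 0 < lam ∧ lam < ε ∧ ∃ n : H, ‖n‖ = 1 ∧ ∃ a : ℝ × H,
      Wfin lam c₁ s n J (w₁ + a) = Wgal lam s n J (w₂ + a) := by
  have hn : ∃ n : H, ‖n‖ = 1 ∧ ∃ d : ℝ, w₁.2 = w₂.2 + d • n := by
    by_cases h : w₁.2 - w₂.2 = 0
    · obtain ⟨n, hn⟩ := exists_norm_eq H (zero_le_one : (0 : ℝ) ≤ 1)
      exact ⟨n, hn, 0, by rw [zero_smul, add_zero]; exact sub_eq_zero.mp h⟩
    · have h' : ‖w₁.2 - w₂.2‖ ≠ 0 := norm_ne_zero_iff.mpr h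
      refine ⟨(‖w₁.2 - w₂.2‖)⁻¹ • (w₁.2 - w₂.2), ?_, ‖w₁.2 - w₂.2‖, ?_⟩
      · rw [norm_smul, norm_inv, norm_norm, inv_mul_cancel₀ h']
      · rw [smul_smul, mul_inv_cancel₀ h', one_smul]; abel
  obtain ⟨n, hn, d, hd⟩ := hn
  obtain ⟨t₁, x₁⟩ := w₁
  obtain ⟨t₂, x₂⟩ := w₂
  simp only at hd
  subst hd
  have hnn : ⟪n, n⟫_ℝ = 1 := by rw [real_inner_self_eq_norm_sq, hn]; norm_num
  have hs2 : s ^ 2 = 1 := by rcases hs with h | h <;> rw [h] <;> norm_num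
  refine ⟨ε / 2, by linarith, by linarith, n, hn, ?_⟩
  obtain ⟨l, hl⟩ : ∃ l, l = ε / 2 := ⟨_, rfl⟩
  rw [← hl]
  have hl0 : 0 < l := by linarith
  have hlc : l < c₁ := by linarith
  obtain ⟨g, hg⟩ : ∃ g, g = Real.sqrt |1 - l ^ 2 / c₁ ^ 2| := ⟨_, rfl⟩
  have hr0 : 0 < l ^ 2 / c₁ ^ 2 := by positivity
  have hr1 : l ^ 2 / c₁ ^ 2 < 1 := by
    rw [div_lt_one (by positivity)]; nlinarith
  have hg2 : g ^ 2 = 1 - l ^ 2 / c₁ ^ 2 := by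
    rw [hg, Real.sq_sqrt (abs_nonneg _), abs_of_pos (by linarith)]
  have hg0 : 0 < g := by
    rw [hg]; apply Real.sqrt_pos.mpr; rw [abs_of_pos (by linarith)]; linarith
  have hg1 : g < 1 := by nlinarith
  obtain ⟨b, hb⟩ : ∃ b, b = l / c₁ ^ 2 := ⟨_, rfl⟩
  have hbl : b * l = 1 - g ^ 2 := by rw [hg2, hb]; ring
  have key : ∃ T X : ℝ, (s * T - b * X) = g * (s * (T - (t₁ - t₂))) ∧
      (l * T - s * X) = g * (l * (T - (t₁ - t₂)) - s * (X - d)) := by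
    obtain ⟨p, hp⟩ : ∃ p, p = -s * g * (t₁ - t₂) := ⟨_, rfl⟩
    obtain ⟨q, hq⟩ : ∃ q, q = g * (-l * (t₁ - t₂) + s * d) := ⟨_, rfl⟩
    have hD : g * (1 - g) ^ 2 ≠ 0 := by
      have : 0 < 1 - g := by linarith
      positivity
    obtain ⟨D, hDD⟩ : ∃ D, D = g * (1 - g) ^ 2 := ⟨_, rfl⟩
    rw [← hDD] at hD
    have e1 : s * (1 - g) * ((-p * s * (1 - g) + b * q) / D)
        - b * ((s * (1 - g) * q - l * (1 - g) * p) / D) = p := by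
      field_simp
      rw [hDD]
      linear_combination (-(1 - g) ^ 2 * p) * hs2 + (1 - g) * p * hbl
    have e2 : l * (1 - g) * ((-p * s * (1 - g) + b * q) / D)
        - s * (1 - g) * ((s * (1 - g) * q - l * (1 - g) * p) / D) = q := by
      field_simp
      rw [hDD]
      linear_combination (-(1 - g) ^ 2 * q) * hs2 + (1 - g) * q * hbl
    refine ⟨(-p * s * (1 - g) + b * q) / D,
      (s * (1 - g) * q - l * (1 - g) * p) / D, ?_, ?_⟩
    · linear_combination e1 + hp
    · linear_combination e2 + hq
  obtain ⟨T, X, h1, h2⟩ := key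
  refine ⟨(T - t₁, (X - d - ⟪n, x₂⟫_ℝ) • n), ?_⟩
  have i1 : ⟪n, x₂ + d • n + (X - d - ⟪n, x₂⟫_ℝ) • n⟫_ℝ = X := by
    rw [inner_add_right, inner_add_right, real_inner_smul_right, real_inner_smul_right, hnn]; ring
  have i2 : ⟪n, x₂ + (X - d - ⟪n, x₂⟫_ℝ) • n⟫_ℝ = X - d := by
    rw [inner_add_right, real_inner_smul_right, hnn]; ring
  unfold Wfin Wgal
  simp only [Prod.mk_add_mk]
  rw [i1, i2, ← hg, ← hb]
  have a1 : t₁ + (T - t₁) = T := by ring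
  have a2 : t₂ + (T - t₁) = T - (t₁ - t₂) := by ring
  rw [a1, a2, h1, h2, mul_div_cancel_left₀ _ hg0.ne', mul_div_cancel_left₀ _ hg0.ne']
  congr 2
  module
end

section
/- Let H be a real Hilbert space, let 0 < c₁, c₂ < ∞ with c₁ ≠ c₂, let λ ∈ (0,∞) with λ ∉ {c₁, c₂, σ(c₁,c₂)} where σ(c₁,c₂) = ((c₁⁻² + c₂⁻²)/2)^{−1/2}, let s ∈ {−1,1}, let J be a unitary operator on H, and let n ∈ H be a unit vector. If a vector w ∈ M(H) satisfies W_{λ,c₁}[s,n,J] w = W_{λ,c₂}[s,n,J] w, then T(w) = 0 and ⟨n,w⟩ = 0. -/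
open scoped InnerProductSpace

/-- Lemma: if `0 < c₁,c₂ < ∞`, `c₁ ≠ c₂`, `λ ∈ (0,∞)` with
`λ ∉ {c₁, c₂, σ(c₁,c₂)}` where `σ(c₁,c₂) = ((c₁⁻² + c₂⁻²)/2)^(−1/2)`, and
`W_{λ,c₁}[s,n,J] w = W_{λ,c₂}[s,n,J] w`, then `T(w) = 0` and `⟨n,w⟩ = 0`. -/
theorem stmt7 {H : Type*} [NormedAddCommGroup H] [InnerProductSpace ℝ H] [CompleteSpace H]
    (c₁ c₂ : ℝ) (hc₁ : 0 < c₁) (hc₂ : 0 < c₂) (hcc : c₁ ≠ c₂)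
    (lam : ℝ) (hlam : 0 < lam) (hl₁ : lam ≠ c₁) (hl₂ : lam ≠ c₂)
    (hlσ : lam ≠ (((c₁ ^ 2)⁻¹ + (c₂ ^ 2)⁻¹) / 2) ^ (-(1 / 2 : ℝ)))
    (s : ℝ) (hs : s = 1 ∨ s = -1) (J : H ≃ₗᵢ[ℝ] H) (n : H) (hn : ‖n‖ = 1)
    (w : ℝ × H) (hw : Wfin lam c₁ s n J w = Wfin lam c₂ s n J w) :
    w.1 = 0 ∧ ⟪n, w.2⟫_ℝ = 0 := by
  have hA : 1 - lam ^ 2 / c₁ ^ 2 ≠ 0 := by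
    intro h
    have h2 : lam ^ 2 = c₁ ^ 2 := by field_simp at h; linarith
    exact hl₁ ((pow_left_inj₀ hlam.le hc₁.le two_ne_zero).1 h2)
  have hB : 1 - lam ^ 2 / c₂ ^ 2 ≠ 0 := by
    intro h
    have h2 : lam ^ 2 = c₂ ^ 2 := by field_simp at h; linarith
    exact hl₂ ((pow_left_inj₀ hlam.le hc₂.le two_ne_zero).1 h2)
  have hAB : |1 - lam ^ 2 / c₁ ^ 2| ≠ |1 - lam ^ 2 / c₂ ^ 2| := by
    intro h
    rcases abs_eq_abs.1 h with h | h
    · have h1 : c₁ ^ 2 = c₂ ^ 2 := by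
        have h3 : lam ^ 2 / c₁ ^ 2 = lam ^ 2 / c₂ ^ 2 := by linarith
        rw [div_eq_div_iff (by positivity) (by positivity)] at h3
        exact (mul_left_cancel₀ (by positivity) h3).symm
      exact hcc ((pow_left_inj₀ hc₁.le hc₂.le two_ne_zero).1 h1)
    · apply hlσ
      have h1 : ((c₁ ^ 2)⁻¹ + (c₂ ^ 2)⁻¹) / 2 = (lam ^ 2)⁻¹ := by
        apply eq_inv_of_mul_eq_one_left
        simp only [div_eq_mul_inv] at h ⊢
        linarith
      rw [h1, Real.rpow_neg (by positivity), ← Real.sqrt_eq_rpow, Real.sqrt_inv, inv_inv,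
        Real.sqrt_sq hlam.le]
  have hn0 : n ≠ 0 := by
    rintro rfl
    simp at hn
  have hss : s * s = 1 := by rcases hs with rfl | rfl <;> norm_num
  simp only [Wfin, Prod.mk.injEq] at hw
  obtain ⟨e1, e2⟩ := hw
  have e3 := smul_left_injective ℝ hn0 (add_right_cancel (J.injective e2))
  clear e2
  have k1 : lam / c₁ ^ 2 * lam = lam ^ 2 / c₁ ^ 2 := by ring
  have k2 : lam / c₂ ^ 2 * lam = lam ^ 2 / c₂ ^ 2 := by ring
  have p1 := Real.sqrt_pos.2 (abs_pos.2 hA)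
  have p2 := Real.sqrt_pos.2 (abs_pos.2 hB)
  have q1 := Real.sq_sqrt (abs_nonneg (1 - lam ^ 2 / c₁ ^ 2))
  have q2 := Real.sq_sqrt (abs_nonneg (1 - lam ^ 2 / c₂ ^ 2))
  have r1 := sq_abs (1 - lam ^ 2 / c₁ ^ 2)
  have r2 := sq_abs (1 - lam ^ 2 / c₂ ^ 2)
  generalize √|1 - lam ^ 2 / c₁ ^ 2| = g₁ at *
  generalize √|1 - lam ^ 2 / c₂ ^ 2| = g₂ at *
  generalize ⟪n, w.2⟫_ℝ = x at *
  generalize w.1 = t at *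
  rw [← q1, ← q2] at hAB
  rw [← q1] at r1
  rw [← q2] at r2
  rw [div_eq_div_iff p1.ne' p2.ne'] at e1 e3
  have hx : lam * t - s * x = 0 := by
    by_contra hne
    exact hAB (by rw [mul_left_cancel₀ hne e3])
  have hx' : x = s * lam * t := by linear_combination -s * hx - x * hss
  have ht : t = 0 := by
    by_contra hne
    have f : (1 - lam ^ 2 / c₁ ^ 2) * g₂ = (1 - lam ^ 2 / c₂ ^ 2) * g₁ := by
      have hs0 : s ≠ 0 := by rintro rfl; simp at hss
      apply mul_left_cancel₀ (mul_ne_zero hs0 hne)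
      rw [hx'] at e1
      linear_combination e1 + s * t * g₂ * k1 - s * t * g₁ * k2
    have f2 : (g₁ ^ 2 * g₂ ^ 2) * g₁ ^ 2 = (g₁ ^ 2 * g₂ ^ 2) * g₂ ^ 2 := by
      have := congrArg (· ^ 2) f
      simp only [mul_pow] at this
      rw [← r1, ← r2] at this
      linear_combination this
    exact hAB (mul_left_cancel₀ (by positivity) f2)
  exact ⟨ht, by rw [hx', ht, mul_zero]⟩
end

section
/- Let H be a real Hilbert space, let 0 < c₁, c₂ < ∞ with c₁ ≠ c₂, let s ∈ {−1,1}, let J be a unitary operator on H, and let n ∈ H be a unit vector. If a vector w ∈ M(H) satisfies W_{∞,c₁}[s,n,J] w = W_{∞,c₂}[s,n,J] w, then T(w) = 0 and ⟨n,w⟩ = 0. -/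
open scoped InnerProductSpace

/-- Lemma, case `λ = ∞`: if `0 < c₁,c₂ < ∞`, `c₁ ≠ c₂` and
`W_{∞,c₁}[s,n,J] w = W_{∞,c₂}[s,n,J] w`, then `T(w) = 0` and `⟨n,w⟩ = 0`. -/
theorem stmt8 {H : Type*} [NormedAddCommGroup H] [InnerProductSpace ℝ H] [CompleteSpace H]
    (c₁ c₂ : ℝ) (hc₁ : 0 < c₁) (hc₂ : 0 < c₂) (hcc : c₁ ≠ c₂)
    (s : ℝ) (hs : s = 1 ∨ s = -1) (J : H ≃ₗᵢ[ℝ] H) (n : H) (hn : ‖n‖ = 1)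
    (w : ℝ × H) (hw : Wtach c₁ s n J w = Wtach c₂ s n J w) :
    w.1 = 0 ∧ ⟪n, w.2⟫_ℝ = 0 := by
  have hn0 : n ≠ 0 := by
    intro h
    simp [h] at hn
  unfold Wtach at hw
  obtain ⟨h1, h2⟩ := Prod.mk.inj hw
  have h3 := add_right_cancel (J.injective h2)
  have h4 : c₁ * w.1 = c₂ * w.1 := smul_left_injective ℝ hn0 h3
  have hsub : c₁ - c₂ ≠ 0 := sub_ne_zero.mpr hcc
  refine ⟨?_, ?_⟩
  · have h5 : (c₁ - c₂) * w.1 = 0 := by linarith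
    exact (mul_eq_zero.mp h5).resolve_left hsub
  · rw [div_eq_div_iff hc₁.ne' hc₂.ne'] at h1
    have h5 : (c₁ - c₂) * ⟪n, w.2⟫_ℝ = 0 := by linarith
    exact (mul_eq_zero.mp h5).resolve_left hsub
end

section
/- Let H be a real Hilbert space, let 0 < c₁ < ∞, let λ ∈ (0,∞) with λ ∉ {c₁, √2·c₁}, let s ∈ {−1,1}, let J be a unitary operator on H, and let n ∈ H be a unit vector. If a vector w ∈ M(H) satisfies W_{λ,c₁}[s,n,J] w = W_{λ,∞}[s,n,J] w, then T(w) = 0 and ⟨n,w⟩ = 0. -/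
open scoped InnerProductSpace

/-- Lemma, case `c₂ = ∞`: if `0 < c₁ < ∞`, `λ ∈ (0,∞)`,
`λ ∉ {c₁, √2·c₁}`, and `W_{λ,c₁}[s,n,J] w = W_{λ,∞}[s,n,J] w`, then
`T(w) = 0` and `⟨n,w⟩ = 0`. -/
theorem stmt9 {H : Type*} [NormedAddCommGroup H] [InnerProductSpace ℝ H] [CompleteSpace H]
    (c₁ : ℝ) (hc₁ : 0 < c₁)
    (lam : ℝ) (hlam : 0 < lam) (hl₁ : lam ≠ c₁) (hl₂ : lam ≠ Real.sqrt 2 * c₁)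
    (s : ℝ) (hs : s = 1 ∨ s = -1) (J : H ≃ₗᵢ[ℝ] H) (n : H) (hn : ‖n‖ = 1)
    (w : ℝ × H) (hw : Wfin lam c₁ s n J w = Wgal lam s n J w) :
    w.1 = 0 ∧ ⟪n, w.2⟫_ℝ = 0 := by
  have hn0 : n ≠ 0 := by
    intro h
    simp [h] at hn
  simp only [Wfin, Wgal, Prod.mk.injEq, EmbeddingLike.apply_eq_iff_eq, add_left_inj] at hw
  obtain ⟨h1, h2⟩ := hw
  have h2 := smul_left_injective ℝ hn0 h2
  generalize ⟪n, w.2⟫_ℝ = x at *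
  generalize w.1 = t at *
  have hu : 0 < lam ^ 2 / c₁ ^ 2 := by positivity
  have hu1 : lam ^ 2 / c₁ ^ 2 ≠ 1 := by
    intro h
    rw [div_eq_one_iff_eq (by positivity)] at h
    exact hl₁ ((pow_left_inj₀ hlam.le hc₁.le two_ne_zero).1 h)
  have hu2 : lam ^ 2 / c₁ ^ 2 ≠ 2 := by
    intro h
    rw [div_eq_iff (by positivity)] at h
    refine hl₂ ((pow_left_inj₀ hlam.le (by positivity) two_ne_zero).1 ?_)
    rw [mul_pow, Real.sq_sqrt (by norm_num), h]
  have hv : lam / c₁ ^ 2 * lam = lam ^ 2 / c₁ ^ 2 := by ring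
  generalize lam ^ 2 / c₁ ^ 2 = u at *
  generalize lam / c₁ ^ 2 = v at *
  have hpos : 0 < |1 - u| := abs_pos.2 (sub_ne_zero.2 hu1.symm)
  have hg : 0 < Real.sqrt |1 - u| := Real.sqrt_pos.2 hpos
  have hgg : Real.sqrt |1 - u| ^ 2 = |1 - u| := Real.sq_sqrt hpos.le
  generalize Real.sqrt |1 - u| = g at *
  have hg1 : g ≠ 1 := by
    rintro rfl
    rcases abs_cases (1 - u) with ⟨h, _⟩ | ⟨h, _⟩
    · apply hu.ne'
      linarith
    · apply hu2
      linarith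
  rw [div_eq_iff hg.ne'] at h1 h2
  have hss : s * s = 1 := by rcases hs with rfl | rfl <;> norm_num
  have ha : lam * t - s * x = 0 := by
    have : (lam * t - s * x) * (g - 1) = 0 := by linarith
    exact (mul_eq_zero.1 this).resolve_right (sub_ne_zero.2 hg1)
  have hx : x = s * lam * t := by linear_combination (-x) * hss - s * ha
  have ht : t * (1 - u - g) = 0 := by
    rw [hx] at h1
    linear_combination s * h1 - (t - t * v * lam - t * g) * hss + t * hv
  have ht0 : t = 0 := by
    rcases mul_eq_zero.1 ht with h | h
    · exact h
    · exfalso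
      have h' : 1 - u = g := by linarith
      rw [h', abs_of_pos hg] at hgg
      apply hg1
      have : g * (g - 1) = 0 := by linarith
      linarith [(mul_eq_zero.1 this).resolve_left hg.ne']
  exact ⟨ht0, by rw [hx, ht0, mul_zero]⟩
end

section
/- Let H be a real Hilbert space, let 0 < c₁, c₂ < ∞ with c₁ ≠ c₂, let s ∈ {−1,1}, let J be a unitary operator on H, and let n ∈ H be a unit vector. Then for every w ∈ M(H) and every ε ∈ (0, min(c₁,c₂)) there exist λ ∈ (0,ε) and a ∈ M(H) such that W_{λ,c₁}[s,n,J;a] w ≠ W_{λ,c₂}[s,n,J;a] w. -/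
open scoped InnerProductSpace

/-- Corollary: for `0 < c₁,c₂ < ∞`, `c₁ ≠ c₂`, any `w ∈ M(H)` and any
`ε ∈ (0, min(c₁,c₂))` there exist `λ ∈ (0,ε)` and `a ∈ M(H)` with
`W_{λ,c₁}[s,n,J;a] w ≠ W_{λ,c₂}[s,n,J;a] w`. -/
theorem stmt10 {H : Type*} [NormedAddCommGroup H] [InnerProductSpace ℝ H] [CompleteSpace H]
    (c₁ c₂ : ℝ) (hc₁ : 0 < c₁) (hc₂ : 0 < c₂) (hcc : c₁ ≠ c₂)
    (s : ℝ) (hs : s = 1 ∨ s = -1) (J : H ≃ₗᵢ[ℝ] H) (n : H) (hn : ‖n‖ = 1)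
    (w : ℝ × H) (ε : ℝ) (hε : 0 < ε) (hε' : ε < min c₁ c₂) :
    ∃ lam : ℝ, 0 < lam ∧ lam < ε ∧ ∃ a : ℝ × H,
      Wfin lam c₁ s n J (w + a) ≠ Wfin lam c₂ s n J (w + a) := by
  have h1 : ε < c₁ := lt_of_lt_of_le hε' (min_le_left _ _)
  have h2 : ε < c₂ := lt_of_lt_of_le hε' (min_le_right _ _)
  refine ⟨ε / 2, by linarith, by linarith, (1, 0) - w, ?_⟩
  rw [add_sub_cancel]
  intro h
  have hpos : ∀ c : ℝ, 0 < c → ε < c → 0 < 1 - (ε / 2) ^ 2 / c ^ 2 := by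
    intro c hc hec
    rw [sub_pos, div_lt_one (by positivity)]
    nlinarith
  have p1 := hpos c₁ hc₁ h1
  have p2 := hpos c₂ hc₂ h2
  have hf := congrArg Prod.fst h
  simp only [Wfin, inner_zero_right, mul_zero, sub_zero, mul_one] at hf
  rw [abs_of_pos p1, abs_of_pos p2] at hf
  have hinj : ∀ a x y : ℝ, a ≠ 0 → a / x = a / y → x = y := by
    intro a x y ha hxy
    rw [div_eq_mul_inv, div_eq_mul_inv] at hxy
    exact inv_injective (mul_left_cancel₀ ha hxy)
  have hs0 : s ≠ 0 := by rcases hs with rfl | rfl <;> norm_num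
  have hq := (Real.sqrt_inj p1.le p2.le).1 (hinj _ _ _ hs0 hf)
  have hq2 : (ε / 2) ^ 2 / c₁ ^ 2 = (ε / 2) ^ 2 / c₂ ^ 2 := by linarith
  have hq3 : c₁ ^ 2 = c₂ ^ 2 :=
    hinj _ _ _ (by positivity : (ε / 2) ^ 2 ≠ 0) hq2
  exact hcc ((pow_left_inj₀ hc₁.le hc₂.le two_ne_zero).1 hq3)
end

section
/- Let H be a real Hilbert space, let 0 < c₁ < ∞, let s ∈ {−1,1}, let J be a unitary operator on H, and let n ∈ H be a unit vector. Then for every w ∈ M(H) and every ε ∈ (0, c₁) there exist λ ∈ (0,ε) and a ∈ M(H) such that W_{λ,c₁}[s,n,J;a] w ≠ W_{λ,∞}[s,n,J;a] w. -/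
open scoped InnerProductSpace

/-- Corollary, case `c₂ = ∞`: for `0 < c₁ < ∞`, any `w ∈ M(H)` and any
`ε ∈ (0,c₁)` there exist `λ ∈ (0,ε)` and `a ∈ M(H)` with
`W_{λ,c₁}[s,n,J;a] w ≠ W_{λ,∞}[s,n,J;a] w`. -/
theorem stmt11 {H : Type*} [NormedAddCommGroup H] [InnerProductSpace ℝ H] [CompleteSpace H]
    (c₁ : ℝ) (hc₁ : 0 < c₁)
    (s : ℝ) (hs : s = 1 ∨ s = -1) (J : H ≃ₗᵢ[ℝ] H) (n : H) (hn : ‖n‖ = 1)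
    (w : ℝ × H) (ε : ℝ) (hε : 0 < ε) (hε' : ε < c₁) :
    ∃ lam : ℝ, 0 < lam ∧ lam < ε ∧ ∃ a : ℝ × H,
      Wfin lam c₁ s n J (w + a) ≠ Wgal lam s n J (w + a) := by
  refine ⟨ε / 2, by linarith, by linarith, (0, n) - w, ?_⟩
  have hnn : ⟪n, n⟫_ℝ = 1 := by
    rw [real_inner_self_eq_norm_sq, hn]; norm_num
  have hlt : (ε / 2) ^ 2 / c₁ ^ 2 < 1 := by
    rw [div_lt_one (by positivity)]
    nlinarith
  have hpos : 0 < Real.sqrt |1 - (ε / 2) ^ 2 / c₁ ^ 2| :=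
    Real.sqrt_pos.mpr (abs_pos.mpr (by linarith))
  intro h
  have h1 := congrArg Prod.fst h
  rw [add_sub_cancel] at h1
  simp only [Wfin, Wgal, hnn, mul_zero, mul_one, zero_sub] at h1
  have h2 : 0 < ε / 2 / c₁ ^ 2 := by positivity
  have h3 := div_pos h2 hpos
  rw [neg_div] at h1
  linarith
end

section
/- Let H be a real Hilbert space, let λ ∈ [0,∞), s ∈ {−1,1}, let J be a unitary operator on H, and let n ∈ H be a unit vector. Then W_{λ,c}[s,n,J] converges to W_{λ,∞}[s,n,J] in the uniform operator topology as c → ∞; that is, the operator norm ‖W_{λ,c}[s,n,J] − W_{λ,∞}[s,n,J]‖ on M(H) tends to 0 as the real parameter c tends to +∞ (c ranging over (λ,∞)). -/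
open scoped InnerProductSpace

/-- The continuous linear functional `w ↦ ⟨n, w⟩ = ⟨n, Xw⟩` on `M(H) = ℝ × H`. -/
noncomputable def innerF {H : Type*} [NormedAddCommGroup H] [InnerProductSpace ℝ H]
    (n : H) : (ℝ × H) →L[ℝ] ℝ :=
  (innerSL ℝ n).comp (ContinuousLinearMap.snd ℝ ℝ H)

/-- `W_{λ,c}[s,n,J]` (`λ, c` finite) as a continuous linear operator on `M(H)`. -/
noncomputable def WfinL {H : Type*} [NormedAddCommGroup H] [InnerProductSpace ℝ H]
    (lam c s : ℝ) (n : H) (J : H ≃ₗᵢ[ℝ] H) : (ℝ × H) →L[ℝ] (ℝ × H) :=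
  ((s / Real.sqrt |1 - lam ^ 2 / c ^ 2|) • ContinuousLinearMap.fst ℝ ℝ H
      - (lam / c ^ 2 / Real.sqrt |1 - lam ^ 2 / c ^ 2|) • innerF n).prod
    ((J.toContinuousLinearEquiv : H →L[ℝ] H).comp
      ((((lam / Real.sqrt |1 - lam ^ 2 / c ^ 2|) • ContinuousLinearMap.fst ℝ ℝ H
          - (s / Real.sqrt |1 - lam ^ 2 / c ^ 2|) • innerF n).smulRight n)
        + (ContinuousLinearMap.snd ℝ ℝ H - (innerF n).smulRight n)))

/-- `W_{λ,∞}[s,n,J]` as a continuous linear operator on `M(H)`. -/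
noncomputable def WgalL {H : Type*} [NormedAddCommGroup H] [InnerProductSpace ℝ H]
    (lam s : ℝ) (n : H) (J : H ≃ₗᵢ[ℝ] H) : (ℝ × H) →L[ℝ] (ℝ × H) :=
  (s • ContinuousLinearMap.fst ℝ ℝ H).prod
    ((J.toContinuousLinearEquiv : H →L[ℝ] H).comp
      (((lam • ContinuousLinearMap.fst ℝ ℝ H - s • innerF n).smulRight n)
        + (ContinuousLinearMap.snd ℝ ℝ H - (innerF n).smulRight n)))

/-- `W_{λ,c}[s,n,J] → W_{λ,∞}[s,n,J]` in the uniform operator topology as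
`c → +∞`, i.e. the operator norm of the difference tends to `0`.  (The operators `WfinL`
and `WgalL` realize the pointwise formulas `Wfin` and `Wgal`.) -/
theorem stmt13 {H : Type*} [NormedAddCommGroup H] [InnerProductSpace ℝ H] [CompleteSpace H]
    (lam : ℝ) (hlam : 0 ≤ lam) (s : ℝ) (hs : s = 1 ∨ s = -1)
    (J : H ≃ₗᵢ[ℝ] H) (n : H) (hn : ‖n‖ = 1) :
    (∀ c w, WfinL lam c s n J w = Wfin lam c s n J w) ∧
    (∀ w, WgalL lam s n J w = Wgal lam s n J w) ∧
    Filter.Tendsto (fun c : ℝ => ‖WfinL lam c s n J - WgalL lam s n J‖)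
      Filter.atTop (nhds 0) := by
  refine ⟨?_, ?_, ?_⟩
  · intro c w
    simp only [WfinL, Wfin, innerF]
    ext1
    · simp
      ring
    · simp
      congr 2
      ring
  · intro w
    simp [WgalL, Wgal, innerF]
  · have hc : Filter.Tendsto (fun c : ℝ => (c ^ 2)⁻¹) Filter.atTop (nhds 0) :=
      (Filter.tendsto_pow_atTop (two_ne_zero)).inv_tendsto_atTop
    have hq : Filter.Tendsto (fun c : ℝ => Real.sqrt |1 - lam ^ 2 / c ^ 2|)
        Filter.atTop (nhds 1) := by
      have h1 := (((hc.const_mul (lam ^ 2)).const_sub 1).abs).sqrt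
      simpa [div_eq_mul_inv] using h1
    have ha : Filter.Tendsto (fun c : ℝ => (Real.sqrt |1 - lam ^ 2 / c ^ 2|)⁻¹ - 1)
        Filter.atTop (nhds 0) := by
      have h1 := (hq.inv₀ one_ne_zero).sub_const 1
      simpa using h1
    have hb : Filter.Tendsto (fun c : ℝ => lam / c ^ 2 / Real.sqrt |1 - lam ^ 2 / c ^ 2|)
        Filter.atTop (nhds 0) := by
      have h1 := (hc.const_mul lam).mul (hq.inv₀ one_ne_zero)
      simpa [div_eq_mul_inv] using h1
    let P : (ℝ × H) →L[ℝ] (ℝ × H) := (s • ContinuousLinearMap.fst ℝ ℝ H).prod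
      ((J.toContinuousLinearEquiv : H →L[ℝ] H).comp
        ((lam • ContinuousLinearMap.fst ℝ ℝ H - s • innerF n).smulRight n))
    let Q : (ℝ × H) →L[ℝ] (ℝ × H) := (innerF n).prod 0
    have key : ∀ c : ℝ, WfinL lam c s n J - WgalL lam s n J
        = ((Real.sqrt |1 - lam ^ 2 / c ^ 2|)⁻¹ - 1) • P
          - (lam / c ^ 2 / Real.sqrt |1 - lam ^ 2 / c ^ 2|) • Q := by
      intro c
      generalize hr : Real.sqrt |1 - lam ^ 2 / c ^ 2| = r
      apply ContinuousLinearMap.ext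
      intro w
      ext1
      · simp [WfinL, WgalL, P, Q, hr]
        ring
      · simp only [WfinL, WgalL, P, Q, hr]
        simp
        module
    have h : Filter.Tendsto (fun c : ℝ => ‖(Real.sqrt |1 - lam ^ 2 / c ^ 2|)⁻¹ - 1‖ * ‖P‖
        + ‖lam / c ^ 2 / Real.sqrt |1 - lam ^ 2 / c ^ 2|‖ * ‖Q‖) Filter.atTop (nhds 0) := by
      have h1 := (ha.norm.mul_const ‖P‖).add (hb.norm.mul_const ‖Q‖)
      simpa only [norm_zero, zero_mul, add_zero] using h1
    refine squeeze_zero (fun c => ContinuousLinearMap.opNorm_nonneg _) (fun c => ?_) h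
    rw [key c]
    refine ContinuousLinearMap.opNorm_le_bound _ (add_nonneg
      (mul_nonneg (norm_nonneg _) (ContinuousLinearMap.opNorm_nonneg _))
      (mul_nonneg (norm_nonneg _) (ContinuousLinearMap.opNorm_nonneg _))) (fun w => ?_)
    rw [ContinuousLinearMap.sub_apply, ContinuousLinearMap.smul_apply,
      ContinuousLinearMap.smul_apply]
    refine (norm_sub_le _ _).trans ?_
    rw [norm_smul, norm_smul, add_mul, mul_assoc, mul_assoc]
    exact add_le_add
      (mul_le_mul_of_nonneg_left (ContinuousLinearMap.le_opNorm P w) (norm_nonneg _))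
      (mul_le_mul_of_nonneg_left (ContinuousLinearMap.le_opNorm Q w) (norm_nonneg _))
end

section
/- Let 0 < c₁ < c₂ < ∞, let r ≥ 0 and let ε ∈ (0, c₁). Then there exist real numbers λ ∈ (0,ε) and μ such that λ²·( Φ₂((r+μ)/c₂) − Φ₂(μ/c₁) ) = Φ₂(r+μ) − Φ₂(μ), where Φ₂(y) = y·|y|. -/
/-- for `0 < c₁ < c₂ < ∞`, `r ≥ 0` and `ε ∈ (0,c₁)` there exist `λ ∈ (0,ε)`
and `μ ∈ ℝ` with `λ²·(Φ₂((r+μ)/c₂) − Φ₂(μ/c₁)) = Φ₂(r+μ) − Φ₂(μ)`, where `Φ₂(y) = y·|y|`. -/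
theorem stmt18 (c₁ c₂ r ε : ℝ) (hc₁ : 0 < c₁) (hcc : c₁ < c₂) (hr : 0 ≤ r)
    (hε : 0 < ε) (hε' : ε < c₁) :
    ∃ lam μ : ℝ, 0 < lam ∧ lam < ε ∧
      lam ^ 2 * (((r + μ) / c₂) * |(r + μ) / c₂| - (μ / c₁) * |μ / c₁|) =
        (r + μ) * |r + μ| - μ * |μ| := by
  obtain ⟨l, hl, hlε⟩ : ∃ l : ℝ, 0 < l ∧ l < ε := ⟨ε / 2, by linarith, by linarith⟩
  have hc₂ : 0 < c₂ := hc₁.trans hcc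
  have h1 : l / c₁ < 1 := by rw [div_lt_one hc₁]; linarith
  have h2 : l / c₂ < l / c₁ := div_lt_div_of_pos_left hl hc₁ hcc
  have h3 : 0 < l / c₂ := by positivity
  have hb : 0 < 1 - (l / c₁) ^ 2 := by nlinarith
  have hab : 1 - (l / c₁) ^ 2 < 1 - (l / c₂) ^ 2 := by nlinarith
  have ha : 0 < 1 - (l / c₂) ^ 2 := hb.trans hab
  obtain ⟨s, hs0, hs⟩ : ∃ s : ℝ, 0 ≤ s ∧ s ^ 2 = (1 - (l / c₁) ^ 2) / (1 - (l / c₂) ^ 2) :=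
    ⟨√((1 - (l / c₁) ^ 2) / (1 - (l / c₂) ^ 2)), Real.sqrt_nonneg _,
      Real.sq_sqrt (by positivity)⟩
  have hs1 : s < 1 := by
    have : s ^ 2 < 1 := by rw [hs, div_lt_one ha]; exact hab
    nlinarith
  rw [eq_div_iff ha.ne'] at hs
  have hs' : 0 < 1 - s := by linarith
  obtain ⟨m, hm0, hm⟩ : ∃ m : ℝ, m ≤ 0 ∧ r + m = s * m := by
    refine ⟨-(r / (1 - s)), ?_, ?_⟩
    · have : 0 ≤ r / (1 - s) := by positivity
      linarith
    · field_simp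
      ring
  refine ⟨l, m, hl, hlε, ?_⟩
  rw [hm, abs_div, abs_div, abs_mul, abs_of_nonneg hs0, abs_of_nonpos hm0, abs_of_pos hc₁,
    abs_of_pos hc₂]
  have e : l ^ 2 * (s * m / c₂ * (s * -m / c₂) - m / c₁ * (-m / c₁)) =
      m ^ 2 * ((l / c₁) ^ 2 - s ^ 2 * (l / c₂) ^ 2) := by
    ring
  rw [e]
  linear_combination m ^ 2 * hs
end

section
/- Let 0 < c₁ < ∞, let r ≥ 0 and let ε ∈ (0, c₁). Then there exist real numbers λ ∈ (0,ε) and μ such that −λ²·Φ₂(μ/c₁) = Φ₂(r+μ) − Φ₂(μ), where Φ₂(y) = y·|y|. -/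
/-- for `0 < c₁ < ∞`, `r ≥ 0` and `ε ∈ (0,c₁)` there exist `λ ∈ (0,ε)`
and `μ ∈ ℝ` with `−λ²·Φ₂(μ/c₁) = Φ₂(r+μ) − Φ₂(μ)`, where `Φ₂(y) = y·|y|`. -/
theorem stmt19 (c₁ r ε : ℝ) (hc₁ : 0 < c₁) (hr : 0 ≤ r) (hε : 0 < ε) (hε' : ε < c₁) :
    ∃ lam μ : ℝ, 0 < lam ∧ lam < ε ∧
      -(lam ^ 2) * ((μ / c₁) * |μ / c₁|) = (r + μ) * |r + μ| - μ * |μ| := by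
  obtain ⟨t, ht⟩ : ∃ t, t = ε / 2 / c₁ := ⟨_, rfl⟩
  have htp : 0 < t := by rw [ht]; positivity
  have ht1 : t < 1 := by rw [ht, div_lt_one hc₁]; linarith
  have hl : ε / 2 = t * c₁ := by rw [ht]; field_simp
  obtain ⟨k, hk⟩ : ∃ k, k = Real.sqrt (1 - t ^ 2) := ⟨_, rfl⟩
  have hk0 : 0 ≤ k := by rw [hk]; exact Real.sqrt_nonneg _
  have hk2 : k ^ 2 = 1 - t ^ 2 := by rw [hk]; exact Real.sq_sqrt (by nlinarith)
  have hk1 : k < 1 := by nlinarith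
  obtain ⟨m, hm⟩ : ∃ m, m = r / (1 - k) := ⟨_, rfl⟩
  have hm0 : 0 ≤ m := by rw [hm]; exact div_nonneg hr (by linarith)
  have hrm : r = m * (1 - k) := by
    rw [hm, div_mul_cancel₀]; linarith
  refine ⟨ε / 2, -m, by linarith, by linarith, ?_⟩
  have e : r + -m = -(m * k) := by rw [hrm]; ring
  rw [e, neg_div, abs_neg, abs_neg, abs_neg, abs_of_nonneg (div_nonneg hm0 hc₁.le),
    abs_of_nonneg hm0, abs_of_nonneg (mul_nonneg hm0 hk0), hl]
  have : -(t * c₁) ^ 2 * (-(m / c₁) * (m / c₁)) = t ^ 2 * m ^ 2 := by field_simp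
  rw [this]
  linear_combination m ^ 2 * hk2
end
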